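/- Let φ be a 3-SAT instance with n ≥ 3 variables (each clause containing exactly 3 distinct variables) and let h > 1 be an integer. Then the graph G = reduction(φ,h) has at most (n + 88n³)·((56n³)^h − 1)/(56n³ − 1) + 5 vertices. -/

import Mathlib

/-!
The building blocks of layer `k + 1` are addressed by the lists of length `k` over
(clauses) × (seven indices), so with `m` clauses there are `(7m)^k` of them. A single block owns
`n + 3m + 8m = n + 11m` vertices besides its two identified ones, and the initial path contributes
five more. A clause is determined by three variables and three signs, so `m ≤ 8n³`; hence
there are at most `∑_{k < h} (56n³)^k` blocks with at most `n + 88n³` vertices each. The geometric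
sum equals `((56n³)^h - 1) / (56n³ - 1)`, and this division is exact, so multiplying before
dividing in `ℕ` loses nothing.
-/

open SimpleGraph

/-- A 3-SAT clause on Boolean variables indexed by naturals: variables `v1,v2,v3`
with polarities `p1,p2,p3` (`true` = the variable appears positively). -/
structure Clause3 where
  v1 : ℕ
  v2 : ℕ
  v3 : ℕ
  p1 : Bool
  p2 : Bool
  p3 : Bool
deriving DecidableEq

/-- A 3-SAT instance: a nonempty finite set of clauses, each on 3 distinct variables. -/
structure SAT3 where
  clauses : Finset Clause3
  nonempty : clauses.Nonempty
  distinct : ∀ c ∈ clauses, c.v1 ≠ c.v2 ∧ c.v1 ≠ c.v3 ∧ c.v2 ≠ c.v3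

/-- The variables of a 3-SAT instance. -/
def SAT3.vars (φ : SAT3) : Finset ℕ :=
  φ.clauses.biUnion (fun c => {c.v1, c.v2, c.v3})

/-- A truth assignment satisfies a clause if some literal is made true. -/
def Clause3.satisfiedBy (c : Clause3) (a : ℕ → Bool) : Prop :=
  a c.v1 = c.p1 ∨ a c.v2 = c.p2 ∨ a c.v3 = c.p3

/-- A truth assignment satisfies an instance if it satisfies every clause. -/
def SAT3.satisfiedBy (φ : SAT3) (a : ℕ → Bool) : Prop :=
  ∀ c ∈ φ.clauses, c.satisfiedBy a

/-- `x` is one of the three variables of clause `c`. -/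
def Clause3.hasVar (c : Clause3) (x : ℕ) : Prop :=
  x = c.v1 ∨ x = c.v2 ∨ x = c.v3

/-- The 6 × 8 matrix `M` of the construction. -/
def Mmat : Fin 6 → Fin 8 → Bool :=
  ![![true, true, true, true, false, false, false, false],
    ![false, false, false, false, true, true, true, true],
    ![true, true, false, false, true, true, false, false],
    ![false, false, true, true, false, false, true, true],
    ![true, false, true, false, true, false, true, false],
    ![false, true, false, true, false, true, false, true]]

/-- The address of a building block: the (clause, index `r`) choices along the chain of
attachments leading from the root block `G^{1,1}` (address `[]`) to this block; the head of
the list is the most recent attachment.  A block of address `b` lies in layer `b.length + 1`. -/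
abbrev BlockAddr : Type := List (Clause3 × Fin 7)

/-- The ambient vertices of the reduction graph: the five vertices `q1, p1, v, p2, q2` of the
initial path, and for each building block address `b`: the variable vertices `x^b`, the
clause-occurrence vertices `x_c^b`, and the vertices `q_{r,c}^b`.  The vertices
`v_⊕^b, v_⊖^b` of a block are identified with vertices of its parent (see `vplus`, `vminus`). -/
inductive RVert where
  | qp : RVert
  | pp : RVert
  | vv : RVert
  | pm : RVert
  | qm : RVert
  | var : BlockAddr → ℕ → RVert
  | varC : BlockAddr → Clause3 → ℕ → RVert
  | q : BlockAddr → Clause3 → Fin 8 → RVert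

/-- The vertex `v_⊕` of the block with address `b` (an identified vertex of the parent). -/
def vplus : BlockAddr → RVert
  | [] => RVert.qp
  | (c, r) :: b => RVert.q b c r.castSucc

/-- The vertex `v_⊖` of the block with address `b` (an identified vertex of the parent). -/
def vminus : BlockAddr → RVert
  | [] => RVert.qm
  | (c, r) :: b => RVert.q b c r.succ

/-- The group of six vertices `g = (y^b, y_c^b, z^b, z_c^b, w^b, w_c^b)` for clause `c`
with variables `y,z,w` in block `b`. -/
def gvec (b : BlockAddr) (c : Clause3) : Fin 6 → RVert :=
  ![RVert.var b c.v1, RVert.varC b c c.v1,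
    RVert.var b c.v2, RVert.varC b c c.v2,
    RVert.var b c.v3, RVert.varC b c c.v3]

/-- The block with address `b` is present in `reduction(φ, h)`. -/
def validBlock (φ : SAT3) (h : ℕ) (b : BlockAddr) : Prop :=
  b.length + 1 ≤ h ∧ ∀ p ∈ b, p.1 ∈ φ.clauses

/-- The vertices of `reduction(φ, h)` among the ambient vertices. -/
def validVert (φ : SAT3) (h : ℕ) : RVert → Prop
  | RVert.qp => True
  | RVert.pp => True
  | RVert.vv => True
  | RVert.pm => True
  | RVert.qm => True
  | RVert.var b x => validBlock φ h b ∧ x ∈ φ.vars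
  | RVert.varC b c x => validBlock φ h b ∧ c ∈ φ.clauses ∧ c.hasVar x
  | RVert.q b c _ => validBlock φ h b ∧ c ∈ φ.clauses

/-- The edges of the reduction graph (to be symmetrized): the 4 path edges; the edges
`x^b v_⊕^b`, `x^b v_⊖^b`; the edges between the group of six and the `q` vertices given by
the matrix `M`; and the polarity edges, joining `x_c^b` to `v_⊕^b` when `x` occurs
positively in `c` and to `v_⊖^b` otherwise. -/
def baseAdj (u w : RVert) : Prop :=
  (u = RVert.qp ∧ w = RVert.pp) ∨
  (u = RVert.pp ∧ w = RVert.vv) ∨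
  (u = RVert.vv ∧ w = RVert.pm) ∨
  (u = RVert.pm ∧ w = RVert.qm) ∨
  (∃ b x, u = RVert.var b x ∧ (w = vplus b ∨ w = vminus b)) ∨
  (∃ b c k l, Mmat k l = true ∧ u = gvec b c k ∧ w = RVert.q b c l) ∨
  (∃ (b : BlockAddr) (c : Clause3),
    (u = RVert.varC b c c.v1 ∧ w = (if c.p1 then vplus b else vminus b)) ∨
    (u = RVert.varC b c c.v2 ∧ w = (if c.p2 then vplus b else vminus b)) ∨
    (u = RVert.varC b c c.v3 ∧ w = (if c.p3 then vplus b else vminus b)))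

/-- The vertex type of the graph `reduction(φ, h)`. -/
abbrev RedVert (φ : SAT3) (h : ℕ) : Type := {x : RVert // validVert φ h x}

/-- The graph `G = reduction(φ, h)` of the construction. -/
def reductionGraph (φ : SAT3) (h : ℕ) : SimpleGraph (RedVert φ h) :=
  SimpleGraph.comap Subtype.val (SimpleGraph.fromRel baseAdj)

/-- The central vertex `v` of the initial path of `reduction(φ, h)`. -/
def centralVert (φ : SAT3) (h : ℕ) : RedVert φ h := ⟨RVert.vv, trivial⟩

/-- `T` is a tree `t`-spanner of `G`: a spanning tree of `G` all whose distances are within a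
factor `t` of those of `G`. -/
def IsTreeSpanner {V : Type*} (G T : SimpleGraph V) (t : ℕ) : Prop :=
  T ≤ G ∧ T.IsTree ∧ ∀ u w : V, T.dist u w ≤ t * G.dist u w

/-- A spanning tree `T` of `G` is `v`-concentrated if for every `i ≥ 0` the subgraph of `T`
induced by the ball `N_G^i[v]` is connected. -/
def IsConcentrated {V : Type*} (G T : SimpleGraph V) (v : V) : Prop :=
  ∀ i : ℕ, (T.induce {x : V | G.dist v x ≤ i}).Connected

/-! ### Counting clauses, blocks and vertices -/

/-- A clause is determined by an ordered triple of variables and a triple of signs. -/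
lemma card_clauses_le (φ : SAT3) : φ.clauses.card ≤ 8 * φ.vars.card ^ 3 := by
  have hle : φ.clauses.card ≤
      (φ.vars ×ˢ φ.vars ×ˢ φ.vars ×ˢ (Finset.univ : Finset (Bool × Bool × Bool))).card := by
    apply Finset.card_le_card_of_injOn (fun c => (c.v1, c.v2, c.v3, c.p1, c.p2, c.p3))
    · intro c hc
      have hc' : c ∈ φ.clauses := hc
      have hv : ∀ x, c.hasVar x → x ∈ φ.vars := fun x hx =>
        Finset.mem_biUnion.2 ⟨c, hc', by simpa [Clause3.hasVar] using hx⟩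
      simp [hv c.v1 (by simp [Clause3.hasVar]), hv c.v2 (by simp [Clause3.hasVar]),
        hv c.v3 (by simp [Clause3.hasVar])]
    · rintro ⟨⟩ _ ⟨⟩ _ hcd
      simpa using hcd
  refine hle.trans (le_of_eq ?_)
  simp only [Finset.card_product, Finset.card_univ, Fintype.card_prod, Fintype.card_bool]
  ring

open Classical in
/-- The addresses of the building blocks in layer `k + 1`. -/
noncomputable def blockLayer (φ : SAT3) : ℕ → Finset BlockAddr
  | 0 => {[]}
  | k + 1 => ((φ.clauses ×ˢ (Finset.univ : Finset (Fin 7))) ×ˢ blockLayer φ k).image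
      fun p => p.1 :: p.2

lemma card_blockLayer_le (φ : SAT3) (k : ℕ) :
    (blockLayer φ k).card ≤ (7 * φ.clauses.card) ^ k := by
  induction k with
  | zero => simp [blockLayer]
  | succ k ih =>
    refine Finset.card_image_le.trans ?_
    rw [Finset.card_product, Finset.card_product, Finset.card_univ, Fintype.card_fin, pow_succ,
      mul_comm, mul_comm φ.clauses.card]
    gcongr

lemma mem_blockLayer (φ : SAT3) (b : BlockAddr) (hb : ∀ p ∈ b, p.1 ∈ φ.clauses) :
    b ∈ blockLayer φ b.length := by
  induction b with
  | nil => simp [blockLayer]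
  | cons p b ih =>
    refine Finset.mem_image.2 ⟨(p, b), ?_, rfl⟩
    simp only [Finset.mem_product, Finset.mem_univ, and_true]
    exact ⟨hb p (by simp), ih fun q hq => hb q (by simp [hq])⟩

open Classical in
/-- The vertices owned by the block of address `b`: all of its vertices except the two that are
identified with vertices of its parent. -/
noncomputable def ownVerts (φ : SAT3) (b : BlockAddr) : Finset RVert :=
  φ.vars.image (RVert.var b) ∪ φ.clauses.biUnion fun c =>
    {RVert.varC b c c.v1, RVert.varC b c c.v2, RVert.varC b c c.v3} ∪
      Finset.univ.image (RVert.q b c)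

lemma card_ownVerts_le (φ : SAT3) (b : BlockAddr) :
    (ownVerts φ b).card ≤ φ.vars.card + 11 * φ.clauses.card := by
  classical
  refine (Finset.card_union_le _ _).trans (add_le_add Finset.card_image_le ?_)
  rw [mul_comm]
  refine Finset.card_biUnion_le_card_mul _ _ _ fun c _ => ?_
  refine (Finset.card_union_le _ _).trans (add_le_add (b := 3) (d := 8) Finset.card_le_three ?_)
  exact Finset.card_image_le.trans (by simp)

open Classical in
/-- The path vertices together with the vertices owned by the blocks of the first `h` layers. -/
noncomputable def allVerts (φ : SAT3) (h : ℕ) : Finset RVert :=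
  ((Finset.range h).biUnion (blockLayer φ)).biUnion (ownVerts φ) ∪
    {RVert.qp, RVert.pp, RVert.vv, RVert.pm, RVert.qm}

lemma validVert_subset (φ : SAT3) (h : ℕ) : {x | validVert φ h x} ⊆ (allVerts φ h : Set RVert) := by
  classical
  have key : ∀ b, validBlock φ h b → ∀ x ∈ ownVerts φ b, x ∈ allVerts φ h := by
    rintro b ⟨hlen, hb⟩ x hx
    refine Finset.mem_union_left _ (Finset.mem_biUnion.2 ⟨b, Finset.mem_biUnion.2
      ⟨b.length, Finset.mem_range.2 hlen, mem_blockLayer φ b hb⟩, hx⟩)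
  intro x hx
  rw [Finset.mem_coe]
  rw [Set.mem_ofPred_eq] at hx
  cases x with
  | qp | pp | vv | pm | qm => simp [allVerts]
  | var b x => exact key b hx.1 _ (by simp [ownVerts, hx.2])
  | varC b c x =>
    obtain ⟨hb, hc, hx⟩ := hx
    refine key b hb _ (Finset.mem_union_right _ (Finset.mem_biUnion.2 ⟨c, hc, ?_⟩))
    rcases hx with rfl | rfl | rfl <;> simp
  | q b c l =>
    exact key b hx.1 _ (Finset.mem_union_right _ (Finset.mem_biUnion.2 ⟨c, hx.2, by simp⟩))

lemma card_allVerts_le (φ : SAT3) (h : ℕ) :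
    (allVerts φ h).card ≤
      (φ.vars.card + 88 * φ.vars.card ^ 3) *
        (∑ k ∈ Finset.range h, (56 * φ.vars.card ^ 3) ^ k) + 5 := by
  classical
  have hm := card_clauses_le φ
  refine (Finset.card_union_le _ _).trans (add_le_add ?_ Finset.card_le_five)
  refine (Finset.card_biUnion_le_card_mul _ _ _ fun b _ => card_ownVerts_le φ b).trans ?_
  rw [mul_comm]
  refine Nat.mul_le_mul (by omega) (Finset.card_biUnion_le.trans (Finset.sum_le_sum fun k _ => ?_))
  exact (card_blockLayer_le φ k).trans (Nat.pow_le_pow_left (by omega) k)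

/-- Let `φ` be a 3-SAT instance with `n ≥ 3` variables and `h > 1`.
Then `G = reduction(φ, h)` has at most
`(n + 88n³) · ((56n³)^h − 1) / (56n³ − 1) + 5` vertices. -/
theorem reduction_card_vertices_le
    (φ : SAT3) (hn : 3 ≤ φ.vars.card) (h : ℕ) (hh : 1 < h) :
    {x : RVert | validVert φ h x}.ncard ≤
      (φ.vars.card + 88 * φ.vars.card ^ 3) *
        ((56 * φ.vars.card ^ 3) ^ h - 1) / (56 * φ.vars.card ^ 3 - 1) + 5 := by
  have hB : 2 ≤ 56 * φ.vars.card ^ 3 := by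
    have : 1 ≤ φ.vars.card ^ 3 := Nat.one_le_pow _ _ (by omega)
    omega
  have hdvd : 56 * φ.vars.card ^ 3 - 1 ∣ (56 * φ.vars.card ^ 3) ^ h - 1 := by
    simpa using Nat.sub_dvd_pow_sub_pow (56 * φ.vars.card ^ 3) 1 h
  rw [Nat.mul_div_assoc _ hdvd, ← Nat.geomSum_eq hB]
  refine (Set.ncard_le_ncard (validVert_subset φ h) (Finset.finite_toSet _)).trans ?_
  rw [Set.ncard_coe_finset]
  exact card_allVerts_le φ h
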